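/- If G is a simple graph whose edge ideal I(G) has a linear resolution over a field K, then the complement graph of G is chordal; conversely, if the complement of G is chordal then I(G) has a linear resolution over every field (Fröberg's theorem). -/

import Mathlib

open Finsupp

namespace EP

variable (K : Type) [Field K]

/-! ## Simplicial chains over a linearly ordered vertex set -/

variable {V : Type} [Fintype V] [DecidableEq V] [LinearOrder V]

/-- Boundary of a single (oriented) face, given as a finset. -/
noncomputable def bdFace (s : Finset V) : Finset V →₀ K :=
  ∑ v ∈ s, ((-1 : K) ^ ((s.filter (fun w => w < v)).card)) • Finsupp.single (s.erase v) 1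

/-- The simplicial boundary map on the free module on all finsets of vertices
(the augmented oriented chain complex, with the empty set playing the role of
the `(-1)`-dimensional face). -/
noncomputable def bdS : (Finset V →₀ K) →ₗ[K] (Finset V →₀ K) :=
  Finsupp.lsum K fun s => LinearMap.toSpanSingleton K (Finset V →₀ K) (bdFace K s)

/-- Chains supported on faces of a complex `Δ` having `k` vertices. -/
noncomputable def faceSpan (Δ : Set (Finset V)) (k : ℕ) : Submodule K (Finset V →₀ K) :=
  Submodule.span K {c | ∃ F ∈ Δ, F.card = k ∧ c = Finsupp.single F 1}

/-- Dimension of the `d`-th reduced simplicial homology of `Δ` over `K`. -/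
noncomputable def redHomRank (Δ : Set (Finset V)) (d : ℕ) : ℕ :=
  Module.finrank K ↥(faceSpan K Δ (d+1) ⊓ LinearMap.ker (bdS K)) -
    Module.finrank K
      ↥(Submodule.map (bdS K) (faceSpan K Δ (d+2)) ⊓
          (faceSpan K Δ (d+1) ⊓ LinearMap.ker (bdS K)))

/-- The flag complex of a graph: faces are the cliques. -/
def flagComplex (G : SimpleGraph V) : Set (Finset V) :=
  {F | ∀ i ∈ F, ∀ j ∈ F, i ≠ j → G.Adj i j}

/-- The flag complex of the induced subgraph of `G` on `W`. -/
def flagComplexOn (G : SimpleGraph V) (W : Finset V) : Set (Finset V) :=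
  {F | (F : Set V) ⊆ (W : Set V) ∧ ∀ i ∈ F, ∀ j ∈ F, i ≠ j → G.Adj i j}

/-- The induced subcomplex of `Δ` on a vertex subset `W`. -/
def restrictComplex (Δ : Set (Finset V)) (W : Finset V) : Set (Finset V) :=
  {F | F ∈ Δ ∧ F ⊆ W}

/-- The oriented `1`-chain `[a,b]` (so `[a,b] = -[b,a]`). -/
noncomputable def edgeChain (a b : V) : Finset V →₀ K :=
  if a < b then Finsupp.single {a, b} 1 else -Finsupp.single {a, b} 1

/-- The oriented `2`-chain `[x,y,z]`, antisymmetric under transpositions. -/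
noncomputable def triChain (x y z : V) : Finset V →₀ K :=
  if (x < y ∧ y < z) ∨ (y < z ∧ z < x) ∨ (z < x ∧ x < y)
  then Finsupp.single {x, y, z} 1
  else -Finsupp.single {x, y, z} 1

/-! ## Graded Betti numbers of monomial ideals via the Taylor complex -/

variable {n : ℕ}

/-- The multidegree lcm of the monomial generators indexed by `S`. -/
def mlcm {r : ℕ} (g : Fin r → (Fin n → ℕ)) (S : Finset (Fin r)) : Fin n → ℕ :=
  fun x => S.sup fun k => g k x

/-- The differential of the Taylor complex tensored with the residue field `K`. -/
noncomputable def bdT {r : ℕ} (g : Fin r → (Fin n → ℕ)) :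
    (Finset (Fin r) →₀ K) →ₗ[K] (Finset (Fin r) →₀ K) :=
  Finsupp.lsum K fun S => LinearMap.toSpanSingleton K (Finset (Fin r) →₀ K)
    (∑ k ∈ S, if mlcm g (S.erase k) = mlcm g S
      then ((-1 : K) ^ ((S.filter (fun j => j < k)).card)) • Finsupp.single (S.erase k) (1 : K)
      else 0)

/-- The degree-`j` strand of the Taylor complex in homological degree `p`. -/
noncomputable def strand {r : ℕ} (g : Fin r → (Fin n → ℕ)) (p j : ℕ) :
    Submodule K (Finset (Fin r) →₀ K) :=
  Submodule.span K
    {c | ∃ S : Finset (Fin r), S.card = p ∧ (∑ x, mlcm g S x) = j ∧ c = Finsupp.single S 1}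

/-- `dim_K Tor_p(S/I, K)_j`, computed from the Taylor complex on the monomial
generators `g` of `I`. -/
noncomputable def torRank {r : ℕ} (g : Fin r → (Fin n → ℕ)) (p j : ℕ) : ℕ :=
  Module.finrank K ↥(strand K g p j ⊓ LinearMap.ker (bdT K g)) -
    Module.finrank K
      ↥(Submodule.map (bdT K g) (strand K g (p+1) j) ⊓
          (strand K g p j ⊓ LinearMap.ker (bdT K g)))

/-- The graded Betti number `β_{i,j}(I)` of the monomial ideal `I` generated by
the monomials with exponent vectors `g`, i.e. `dim_K Tor_i(I, K)_j = dim_K Tor_{i+1}(S/I, K)_j`. -/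
noncomputable def betti {r : ℕ} (g : Fin r → (Fin n → ℕ)) (i j : ℕ) : ℕ :=
  torRank K g (i+1) j

/-- The monomial with exponent vector `a`. -/
noncomputable def mono (a : Fin n → ℕ) : MvPolynomial (Fin n) K :=
  MvPolynomial.monomial (Finsupp.equivFunOnFinite.symm a) 1

/-- `g` is a list of exponent vectors of monomials generating the ideal `I`. -/
def IsGenSet {r : ℕ} (g : Fin r → (Fin n → ℕ)) (I : Ideal (MvPolynomial (Fin n) K)) : Prop :=
  Ideal.span (Set.range fun k => mono K (g k)) = I

/-- The ideal (generated by the monomials with exponent vectors `g`) has a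
`d`-linear resolution. -/
def HasLinRes {r : ℕ} (g : Fin r → (Fin n → ℕ)) (d : ℕ) : Prop :=
  ∀ i j, betti K g i j ≠ 0 → j = i + d

/-- Castelnuovo–Mumford regularity of a monomial ideal, from its Betti numbers. -/
noncomputable def regT {r : ℕ} (g : Fin r → (Fin n → ℕ)) : ℕ :=
  sSup {d | ∃ i j, betti K g i j ≠ 0 ∧ j = i + d}

/-! ## Edge ideals -/

/-- The edge ideal of a simple graph. -/
noncomputable def edgeIdeal (G : SimpleGraph (Fin n)) : Ideal (MvPolynomial (Fin n) K) :=
  Ideal.span {m | ∃ i j : Fin n, G.Adj i j ∧ m = MvPolynomial.X i * MvPolynomial.X j}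

/-- The edge set of `G` as a finset. -/
noncomputable def edgeFins (G : SimpleGraph (Fin n)) : Finset (Sym2 (Fin n)) :=
  letI : Fintype ↥G.edgeSet := Fintype.ofFinite _
  G.edgeFinset

/-- The canonical monomial (exponent vector) generators of the edge ideal of `G`. -/
noncomputable def edgeGens (G : SimpleGraph (Fin n)) : Fin (edgeFins G).card → (Fin n → ℕ) :=
  fun k x => if x ∈ ((edgeFins G).equivFin.symm k : Sym2 (Fin n)) then 1 else 0

/-- The graded Betti numbers `β_{i,j}(I(G))` of the edge ideal of `G` over `K`. -/
noncomputable def gBetti (G : SimpleGraph (Fin n)) (i j : ℕ) : ℕ :=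
  betti K (edgeGens G) i j

/-- The projective dimension `pd(I(G))` of the edge ideal of `G` over `K`. -/
noncomputable def gPd (G : SimpleGraph (Fin n)) : ℕ :=
  sSup {i | ∃ j, gBetti K G i j ≠ 0}

/-- The Green–Lazarsfeld index of the edge ideal of `G` over `K`
(`⊤` iff the ideal has a linear resolution). -/
noncomputable def gIndex (G : SimpleGraph (Fin n)) : ℕ∞ :=
  sInf {N : ℕ∞ | ∃ i j : ℕ, N = (i : ℕ∞) ∧ i + 2 < j ∧ gBetti K G i j ≠ 0}

/-- The regularity of the edge ideal of `G` over `K`. -/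
noncomputable def gReg (G : SimpleGraph (Fin n)) : ℕ :=
  sSup {d | ∃ i j, gBetti K G i j ≠ 0 ∧ j = i + d}

/-- The edge ideal of `G` has a (2-)linear resolution over `K`. -/
def gLinRes (G : SimpleGraph (Fin n)) : Prop :=
  ∀ i j, gBetti K G i j ≠ 0 → j = i + 2

/-- The edge ideal of `G` has almost maximal finite index over `K`:
`index(I(G)) = pd(I(G)) - 1` (with the index finite). -/
def AMFI (G : SimpleGraph (Fin n)) : Prop :=
  gIndex K G + 1 = (gPd K G : ℕ∞)

/-! ## Graph-theoretic notions -/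

/-- `H` contains an induced (chordless) cycle of length `l`. -/
def HasInducedCycle {W : Type} (H : SimpleGraph W) (l : ℕ) : Prop :=
  ∃ f : ZMod l → W, Function.Injective f ∧
    ∀ i j : ZMod l, H.Adj (f i) (f j) ↔ (j = i + 1 ∨ i = j + 1)

/-- `H` is chordal: it has no induced cycle of length greater than `3`. -/
def Chordal {W : Type} (H : SimpleGraph W) : Prop :=
  ∀ l : ℕ, 3 < l → ¬ HasInducedCycle H l

end EP

/-!
The degree-`j` strand of the Taylor complex of `I(G)` is the relative chain complex of the family
of sets of edges covering exactly `j` vertices, so `I(G)` has a linear resolution iff these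
complexes are exact in every positive degree other than `j - 1`.

If `Gᶜ` is chordal, Dirac's theorem gives it a simplicial vertex `v`. Every edge of `G` has then an
endpoint equal or adjacent to `v`, hence, listing the edges through `v` first and recursing on
`G - v`, each colon ideal of the preceding edges by the next one is generated by variables. Adding
the generators in this order shows the strands to be exact.

Conversely, let `W` be the vertex set of an induced cycle of length `l > 3` in `Gᶜ`. The sets of
edges with union `W` span a direct summand of the degree-`l` strand. By inclusion-exclusion its
Euler characteristic is `(-1) ^ l` times the alternating count of the cliques of the cycle, which
is `1 - l + l = 1`. A linear resolution would confine the homology to degree `l - 1`, giving the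
opposite sign.
-/

namespace EP

/-! ## Relative chain complexes -/

section RelativeChains

open Finset (card_insert_of_notMem)

variable {K : Type} [Field K] {ι : Type}

lemma faceSpan_eq_supported (F : Set (Finset ι)) (p : ℕ) :
    faceSpan K F p = Finsupp.supported K K {S | S ∈ F ∧ S.card = p} := by
  rw [faceSpan, Finsupp.supported_eq_span_single]
  congr 1
  ext c
  simp only [Set.mem_ofPred_eq, Set.mem_image, and_assoc, eq_comm]

lemma mem_faceSpan {F : Set (Finset ι)} {p : ℕ} {z : Finset ι →₀ K} :
    z ∈ faceSpan K F p ↔ ∀ S, z S ≠ 0 → S ∈ F ∧ S.card = p := by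
  simp only [faceSpan_eq_supported, Finsupp.mem_supported, Set.subset_def, Finset.mem_coe,
    Finsupp.mem_support_iff, Set.mem_ofPred_eq]

lemma apply_eq_zero_of_mem_faceSpan {F : Set (Finset ι)} {p : ℕ} {z : Finset ι →₀ K}
    (hz : z ∈ faceSpan K F p) {S : Finset ι} (hS : S ∉ F) : z S = 0 :=
  not_not.1 fun h => hS (mem_faceSpan.1 hz S h).1

lemma faceSpan_mono {F G : Set (Finset ι)} (h : F ⊆ G) (p : ℕ) :
    faceSpan K F p ≤ faceSpan K G p :=
  Submodule.span_mono fun _ ⟨S, hS, hc⟩ => ⟨S, h hS, hc⟩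

lemma filter_mem_faceSpan {F G : Set (Finset ι)} [DecidablePred (· ∈ G)] {p : ℕ}
    {z : Finset ι →₀ K} (hz : z ∈ faceSpan K F p) :
    z.filter (· ∈ G) ∈ faceSpan K (F ∩ G) p := by
  refine mem_faceSpan.2 fun S hS => ?_
  have hSG : S ∈ G := not_not.1 fun h => hS (Finsupp.filter_apply_neg _ _ h)
  rw [Finsupp.filter_apply_pos _ _ hSG] at hS
  obtain ⟨hSF, hcard⟩ := mem_faceSpan.1 hz S hS
  exact ⟨⟨hSF, hSG⟩, hcard⟩

variable [LinearOrder ι]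

/-- The incidence sign of `k` in the face `insert k S`: the boundary map `bdS` multiplies the face
`S` of `insert k S` by it. -/
def faceSign (K : Type) [Field K] (S : Finset ι) (k : ι) : K :=
  (-1) ^ (S.filter (· < k)).card

lemma faceSign_mul_self (S : Finset ι) (k : ι) : faceSign K S k * faceSign K S k = 1 := by
  rw [faceSign, ← mul_pow, neg_one_mul, neg_neg, one_pow]

lemma faceSign_insert_of_le {k m : ι} (h : k ≤ m) (S : Finset ι) :
    faceSign K (insert m S) k = faceSign K S k := by
  rw [faceSign, Finset.filter_insert, if_neg h.not_gt, faceSign]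

lemma faceSign_insert_of_lt {k m : ι} (h : k < m) {S : Finset ι} (hk : k ∉ S) :
    faceSign K (insert k S) m = -faceSign K S m := by
  rw [faceSign, Finset.filter_insert, if_pos h, card_insert_of_notMem (by simp [hk]), pow_succ,
    faceSign, mul_neg_one]

lemma faceSign_mul_faceSign_insert {k m : ι} (h : k ≠ m) {S : Finset ι} (hk : k ∉ S) (hm : m ∉ S) :
    faceSign K S k * faceSign K (insert k S) m =
      -(faceSign K S m * faceSign K (insert m S) k) := by
  rcases h.lt_or_gt with h | h
  · rw [faceSign_insert_of_lt h hk, faceSign_insert_of_le h.le]; ring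
  · rw [faceSign_insert_of_lt h hm, faceSign_insert_of_le h.le]; ring

lemma faceSign_ne_zero (S : Finset ι) (k : ι) : faceSign K S k ≠ 0 :=
  left_ne_zero_of_mul_eq_one (faceSign_mul_self S k)

lemma bdS_single_apply [Fintype ι] (S T : Finset ι) (c : K) :
    bdS K (single S c) T = ∑ k ∈ Tᶜ, faceSign K T k * single S c (insert k T) := by
  simp only [bdS, bdFace, Finsupp.lsum_single, LinearMap.toSpanSingleton_apply, Finsupp.smul_apply,
    Finsupp.finsetSum_apply, Finsupp.single_apply, smul_eq_mul, mul_ite, mul_one, mul_zero,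
    Finset.mul_sum]
  rw [← Finset.sum_filter, ← Finset.sum_filter]
  refine Finset.sum_congr ?_ fun k hk => ?_
  · ext k
    simp only [Finset.mem_filter, Finset.mem_compl]
    constructor
    · rintro ⟨hk, rfl⟩
      exact ⟨Finset.notMem_erase k S, (Finset.insert_erase hk).symm⟩
    · rintro ⟨hk, rfl⟩
      exact ⟨Finset.mem_insert_self k T, Finset.erase_insert hk⟩
  · obtain ⟨-, rfl⟩ := Finset.mem_filter.1 hk
    rw [mul_comm, ← faceSign_insert_of_le le_rfl, faceSign]

lemma bdS_apply [Fintype ι] (z : Finset ι →₀ K) (T : Finset ι) :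
    bdS K z T = ∑ k ∈ Tᶜ, faceSign K T k * z (insert k T) := by
  induction z using Finsupp.induction_linear with
  | zero => simp
  | add z w hz hw => simp only [map_add, Finsupp.add_apply, hz, hw, mul_add, Finset.sum_add_distrib]
  | single S c => exact bdS_single_apply S T c

variable (K) in
open Classical in
/-- The boundary map of the relative chain complex of a family `F` of finsets: the simplicial
boundary with the faces outside `F` discarded. It squares to zero on chains supported in `F` as
soon as `F` is order-connected. -/
noncomputable def relBoundary (F : Set (Finset ι)) : (Finset ι →₀ K) →ₗ[K] (Finset ι →₀ K) :=
  (Finsupp.supported K K F).subtype ∘ₗ Finsupp.restrictDom K K F ∘ₗ bdS K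

lemma relBoundary_apply_of_mem {F : Set (Finset ι)} {T : Finset ι} (hT : T ∈ F)
    (z : Finset ι →₀ K) : relBoundary K F z T = bdS K z T := by
  classical exact Finsupp.filter_apply_pos _ _ hT

lemma relBoundary_apply_of_notMem {F : Set (Finset ι)} {T : Finset ι} (hT : T ∉ F)
    (z : Finset ι →₀ K) : relBoundary K F z T = 0 := by
  classical exact Finsupp.filter_apply_neg _ _ hT

lemma relBoundary_eq_iff {F : Set (Finset ι)} {p : ℕ} {w z : Finset ι →₀ K}
    (hz : z ∈ faceSpan K F p) : relBoundary K F w = z ↔ ∀ T ∈ F, bdS K w T = z T := by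
  refine ⟨fun h T hT => by rw [← h, relBoundary_apply_of_mem hT], fun h => Finsupp.ext fun T => ?_⟩
  by_cases hT : T ∈ F
  · rw [relBoundary_apply_of_mem hT, h T hT]
  · rw [relBoundary_apply_of_notMem hT, apply_eq_zero_of_mem_faceSpan hz hT]

variable (K) in
/-- The `p`-cycles of the relative chain complex of `F`; a face of cardinality `p` has degree
`p`. -/
noncomputable def relCycles (F : Set (Finset ι)) (p : ℕ) : Submodule K (Finset ι →₀ K) :=
  faceSpan K F p ⊓ LinearMap.ker (relBoundary K F)

variable (K) in
/-- The `p`-boundaries of the relative chain complex of `F`. -/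
noncomputable def relBoundaries (F : Set (Finset ι)) (p : ℕ) : Submodule K (Finset ι →₀ K) :=
  (faceSpan K F (p + 1)).map (relBoundary K F)

variable (K) in
/-- The relative chain complex of `F` has no homology in degree `p`. -/
def ExactAt (F : Set (Finset ι)) (p : ℕ) : Prop :=
  relCycles K F p ≤ relBoundaries K F p

lemma exactAt_iff {F : Set (Finset ι)} {p : ℕ} :
    ExactAt K F p ↔ ∀ z ∈ faceSpan K F p, (∀ T ∈ F, bdS K z T = 0) →
      ∃ w ∈ faceSpan K F (p + 1), ∀ T ∈ F, bdS K w T = z T := by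
  have hker (z : Finset ι →₀ K) : relBoundary K F z = 0 ↔ ∀ T ∈ F, bdS K z T = 0 :=
    relBoundary_eq_iff (zero_mem (faceSpan K F p))
  refine ⟨fun h z hz hdz => ?_, fun h z hz => ?_⟩
  · obtain ⟨w, hw, rfl⟩ := h ⟨hz, (hker z).2 hdz⟩
    exact ⟨w, hw, (relBoundary_eq_iff hz).1 rfl⟩
  · obtain ⟨w, hw, hdw⟩ := h z hz.1 ((hker z).1 hz.2)
    exact ⟨w, hw, (relBoundary_eq_iff hz.1).2 hdw⟩

theorem ExactAt.of_forall_card_ne {F : Set (Finset ι)} {p : ℕ} (h : ∀ S ∈ F, S.card ≠ p) :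
    ExactAt K F p := by
  refine exactAt_iff.2 fun z hz _ => ⟨0, zero_mem _, fun T hT => ?_⟩
  rw [map_zero, Finsupp.zero_apply, eq_comm]
  exact not_not.1 fun hne => h T hT (mem_faceSpan.1 hz T hne).2

variable [Finite ι]

lemma exists_of_bdS_apply_ne_zero {z : Finset ι →₀ K} {T : Finset ι} (h : bdS K z T ≠ 0) :
    ∃ k ∉ T, z (insert k T) ≠ 0 := by
  cases nonempty_fintype ι
  rw [bdS_apply] at h
  obtain ⟨k, hk, hne⟩ := Finset.exists_ne_zero_of_sum_ne_zero h
  exact ⟨k, Finset.mem_compl.1 hk, right_ne_zero_of_mul hne⟩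

lemma bdS_bdS (z : Finset ι →₀ K) : bdS K (bdS K z) = 0 := by
  cases nonempty_fintype ι
  ext T
  have hsum : bdS K (bdS K z) T = ∑ q ∈ (Tᶜ).offDiag,
      faceSign K T q.1 * faceSign K (insert q.1 T) q.2 * z (insert q.2 (insert q.1 T)) := by
    rw [bdS_apply, Finset.sum_finset_product _ (Tᶜ) fun k => (insert k T)ᶜ]
    · simp only [bdS_apply, Finset.mul_sum, mul_assoc]
    · rintro ⟨k, m⟩
      simp only [Finset.mem_offDiag, Finset.mem_compl, Finset.mem_insert, not_or, ne_comm, ne_eq]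
      tauto
  rw [hsum, Finsupp.zero_apply]
  refine Finset.sum_involution (fun q _ => q.swap) ?_ ?_ ?_ fun _ _ => Prod.swap_swap _
  · rintro ⟨k, m⟩ hq
    obtain ⟨hk, hm, hkm⟩ := Finset.mem_offDiag.1 hq
    rw [Prod.swap_prod_mk, Finset.insert_comm k m, ← add_mul,
      faceSign_mul_faceSign_insert hkm (Finset.mem_compl.1 hk) (Finset.mem_compl.1 hm),
      neg_add_cancel, zero_mul]
  · rintro ⟨k, m⟩ hq - heq
    exact (Finset.mem_offDiag.1 hq).2.2 (Prod.mk.inj heq).2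
  · rintro ⟨k, m⟩ hq
    simp only [Finset.mem_offDiag] at hq
    simpa [and_left_comm, eq_comm] using hq

lemma relBoundary_mem_faceSpan {F : Set (Finset ι)} {p : ℕ} {z : Finset ι →₀ K}
    (hz : z ∈ faceSpan K F (p + 1)) : relBoundary K F z ∈ faceSpan K F p := by
  refine mem_faceSpan.2 fun T hT => ?_
  have hTF : T ∈ F := not_not.1 fun h => hT (relBoundary_apply_of_notMem h z)
  rw [relBoundary_apply_of_mem hTF] at hT
  obtain ⟨k, hk, hne⟩ := exists_of_bdS_apply_ne_zero hT
  have hcard := (mem_faceSpan.1 hz _ hne).2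
  rw [card_insert_of_notMem hk] at hcard
  exact ⟨hTF, Nat.succ_injective hcard⟩

lemma bdS_relBoundary_apply {F : Set (Finset ι)} (hF : F.OrdConnected) {p : ℕ} {z : Finset ι →₀ K}
    (hz : z ∈ faceSpan K F p) {T : Finset ι} (hT : T ∈ F) : bdS K (relBoundary K F z) T = 0 := by
  rw [← sub_eq_zero.2 (DFunLike.congr_fun (bdS_bdS z) T), Finsupp.zero_apply, sub_zero,
    ← sub_eq_zero, ← Finsupp.sub_apply, ← map_sub]
  by_contra h
  obtain ⟨k, -, hne⟩ := exists_of_bdS_apply_ne_zero h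
  by_cases hkF : insert k T ∈ F
  · exact hne (by rw [Finsupp.sub_apply, relBoundary_apply_of_mem hkF, sub_self])
  · rw [Finsupp.sub_apply, relBoundary_apply_of_notMem hkF, zero_sub, neg_ne_zero] at hne
    obtain ⟨m, -, hm⟩ := exists_of_bdS_apply_ne_zero hne
    exact hkF (hF.out hT (mem_faceSpan.1 hz _ hm).1
      ⟨Finset.subset_insert k T, Finset.subset_insert m _⟩)

lemma relBoundaries_le_relCycles {F : Set (Finset ι)} (hF : F.OrdConnected) (p : ℕ) :
    relBoundaries K F p ≤ relCycles K F p := by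
  rintro _ ⟨z, hz, rfl⟩
  exact ⟨relBoundary_mem_faceSpan hz,
    (relBoundary_eq_iff (zero_mem (faceSpan K F p))).2 fun T hT => bdS_relBoundary_apply hF hz hT⟩

lemma bdS_apply_eq_zero_of_isUpperSet {F U : Set (Finset ι)} (hU : IsUpperSet U) {p : ℕ}
    {z : Finset ι →₀ K} (hz : z ∈ faceSpan K (F \ U) p) {T : Finset ι} (hT : T ∈ U) :
    bdS K z T = 0 := by
  by_contra h
  obtain ⟨k, -, hne⟩ := exists_of_bdS_apply_ne_zero h
  exact (mem_faceSpan.1 hz _ hne).1.2 (hU (Finset.subset_insert k T) hT)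

-- The middle of the long exact sequence of the subcomplex on `F \ U` and its quotient on `F ∩ U`.
theorem ExactAt.of_isUpperSet {F U : Set (Finset ι)} (hF : F.OrdConnected) (hU : IsUpperSet U)
    {p : ℕ} (hFU : ExactAt K (F ∩ U) p) (hFL : ExactAt K (F \ U) p) : ExactAt K F p := by
  classical
  refine exactAt_iff.2 fun z hz hdz => ?_
  have hzL : z.filter (· ∉ U) ∈ faceSpan K (F \ U) p := filter_mem_faceSpan (G := Uᶜ) hz
  have hdzU : ∀ T ∈ F ∩ U, bdS K (z.filter (· ∈ U)) T = 0 := by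
    intro T hT
    have := hdz T hT.1
    rwa [← Finsupp.filter_add_filter_not z (· ∈ U), map_add, Finsupp.add_apply,
      bdS_apply_eq_zero_of_isUpperSet hU hzL hT.2, add_zero] at this
  obtain ⟨u, hu, hdu⟩ := exactAt_iff.1 hFU _ (filter_mem_faceSpan hz) hdzU
  have huF : u ∈ faceSpan K F (p + 1) := faceSpan_mono Set.inter_subset_left _ hu
  have hy : z - relBoundary K F u ∈ faceSpan K (F \ U) p := by
    refine mem_faceSpan.2 fun S hS => ?_
    obtain ⟨hSF, hcard⟩ :=
      mem_faceSpan.1 (sub_mem hz (relBoundary_mem_faceSpan huF)) S hS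
    refine ⟨⟨hSF, fun hSU => hS ?_⟩, hcard⟩
    rw [Finsupp.sub_apply, relBoundary_apply_of_mem hSF, hdu S ⟨hSF, hSU⟩,
      Finsupp.filter_apply_pos _ _ hSU, sub_self]
  obtain ⟨l, hl, hdl⟩ := exactAt_iff.1 hFL _ hy fun T hT => by
    rw [map_sub, Finsupp.sub_apply, hdz T hT.1, bdS_relBoundary_apply hF huF hT.1, sub_zero]
  refine ⟨u + l, add_mem huF (faceSpan_mono Set.sdiff_subset _ hl), fun T hT => ?_⟩
  rw [map_add, Finsupp.add_apply]
  by_cases hTU : T ∈ U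
  · rw [bdS_apply_eq_zero_of_isUpperSet hU hl hTU, add_zero, hdu T ⟨hT, hTU⟩,
      Finsupp.filter_apply_pos _ _ hTU]
  · rw [hdl T ⟨hT, hTU⟩, Finsupp.sub_apply, relBoundary_apply_of_mem hT, add_sub_cancel]

theorem ExactAt.of_comparable_closed {F G : Set (Finset ι)} (hGF : G ⊆ F)
    (hG : ∀ S ∈ G, ∀ T ∈ F, S ⊆ T ∨ T ⊆ S → T ∈ G) {p : ℕ} (h : ExactAt K F p) :
    ExactAt K G p := by
  classical
  cases nonempty_fintype ι
  refine exactAt_iff.2 fun z hz hdz => ?_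
  have hdzF : ∀ T ∈ F, bdS K z T = 0 := by
    intro T hT
    by_contra hne
    obtain ⟨k, -, hk⟩ := exists_of_bdS_apply_ne_zero hne
    exact hne (hdz T (hG _ (mem_faceSpan.1 hz _ hk).1 T hT (.inr (Finset.subset_insert k T))))
  obtain ⟨w, hw, hdw⟩ := exactAt_iff.1 h z (faceSpan_mono hGF p hz) hdzF
  refine ⟨w.filter (· ∈ G), faceSpan_mono Set.inter_subset_right _ (filter_mem_faceSpan hw),
    fun T hT => ?_⟩
  rw [← hdw T (hGF hT), bdS_apply, bdS_apply]
  refine Finset.sum_congr rfl fun k _ => ?_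
  by_cases hk : insert k T ∈ G
  · rw [Finsupp.filter_apply_pos _ _ hk]
  · have hwk : w (insert k T) = 0 := apply_eq_zero_of_mem_faceSpan hw fun hkF =>
      hk (hG T hT _ hkF (.inl (Finset.subset_insert k T)))
    rw [Finsupp.filter_apply_neg _ _ hk, hwk]

lemma bdS_apply_eq_of_forall_ne {z : Finset ι →₀ K} {T : Finset ι} {k : ι} (hk : k ∉ T)
    (hz : ∀ m ∉ T, m ≠ k → z (insert m T) = 0) :
    bdS K z T = faceSign K T k * z (insert k T) := by
  cases nonempty_fintype ι
  rw [bdS_apply]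
  refine Finset.sum_eq_single_of_mem k (Finset.mem_compl.2 hk) fun m hm hmk => ?_
  rw [hz m (Finset.mem_compl.1 hm) hmk, mul_zero]

/-- The cone over the chain `z` with apex `k`, with signs such that its boundary agrees with `z`
on the faces avoiding `k`. -/
noncomputable def coneChain (k : ι) (z : Finset ι →₀ K) : Finset ι →₀ K :=
  Finsupp.equivFunOnFinite.symm fun S =>
    if k ∈ S then faceSign K (S.erase k) k * z (S.erase k) else 0

lemma coneChain_apply_of_notMem {k : ι} {S : Finset ι} (hk : k ∉ S) (z : Finset ι →₀ K) :
    coneChain k z S = 0 :=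
  if_neg hk

lemma coneChain_apply_insert {k : ι} {S : Finset ι} (hk : k ∉ S) (z : Finset ι →₀ K) :
    coneChain k z (insert k S) = faceSign K S k * z S := by
  rw [coneChain, Finsupp.equivFunOnFinite_symm_apply_apply, if_pos (Finset.mem_insert_self k S),
    Finset.erase_insert hk]

lemma bdS_coneChain_apply_of_notMem {k : ι} {T : Finset ι} (hk : k ∉ T) (z : Finset ι →₀ K) :
    bdS K (coneChain k z) T = z T := by
  rw [bdS_apply_eq_of_forall_ne hk fun m _ hmk => coneChain_apply_of_notMem ?_ z,
    coneChain_apply_insert hk, ← mul_assoc, faceSign_mul_self, one_mul]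
  simpa [hk] using hmk.symm

lemma coneChain_mem_faceSpan {F : Set (Finset ι)} {k : ι} (hF : ∀ S ∈ F, insert k S ∈ F) {p : ℕ}
    {z : Finset ι →₀ K} (hz : z ∈ faceSpan K F p) : coneChain k z ∈ faceSpan K F (p + 1) := by
  refine mem_faceSpan.2 fun S hS => ?_
  have hk : k ∈ S := not_not.1 fun h => hS (coneChain_apply_of_notMem h z)
  rw [← Finset.insert_erase hk, coneChain_apply_insert (Finset.notMem_erase k S)] at hS
  obtain ⟨hSF, hcard⟩ := mem_faceSpan.1 hz _ (right_ne_zero_of_mul hS)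
  exact ⟨Finset.insert_erase hk ▸ hF _ hSF, by rw [← hcard, Finset.card_erase_add_one hk]⟩

theorem ExactAt.of_cone {F : Set (Finset ι)} (hF : F.OrdConnected) {k : ι}
    (hinsert : ∀ S ∈ F, insert k S ∈ F) (herase : ∀ S ∈ F, S.erase k ∈ F) (p : ℕ) :
    ExactAt K F p := by
  refine exactAt_iff.2 fun z hz hdz => ?_
  have hw := coneChain_mem_faceSpan hinsert hz
  refine ⟨coneChain k z, hw, fun T hT => ?_⟩
  by_cases hk : k ∈ T
  swap
  · exact bdS_coneChain_apply_of_notMem hk z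
  -- The cycle `z - ∂ (coneChain k z)` vanishes on the faces avoiding `k`, so its boundary at
  -- `T.erase k` is, up to sign, its coefficient at `T`.
  set x := z - relBoundary K F (coneChain k z)
  have hx : ∀ S, k ∉ S → x S = 0 := by
    intro S hkS
    by_cases hS : S ∈ F
    · rw [Finsupp.sub_apply, relBoundary_apply_of_mem hS, bdS_coneChain_apply_of_notMem hkS,
        sub_self]
    · rw [Finsupp.sub_apply, relBoundary_apply_of_notMem hS, apply_eq_zero_of_mem_faceSpan hz hS,
        sub_zero]
  have hdx : bdS K x (T.erase k) = 0 := by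
    rw [map_sub, Finsupp.sub_apply, hdz _ (herase T hT),
      bdS_relBoundary_apply hF hw (herase T hT), sub_zero]
  rw [bdS_apply_eq_of_forall_ne (Finset.notMem_erase k T)
      fun m _ hmk => hx _ (by simpa using hmk.symm), Finset.insert_erase hk] at hdx
  have hxT : x T = 0 := (mul_eq_zero.1 hdx).resolve_left (faceSign_ne_zero _ _)
  rw [Finsupp.sub_apply, relBoundary_apply_of_mem hT, sub_eq_zero] at hxT
  exact hxT.symm

end RelativeChains

/-! ## Linear quotients -/

section LinearQuotients

variable {ι V : Type*} [DecidableEq V] {D : ι → Finset V}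

lemma monotone_biUnion (D : ι → Finset V) : Monotone fun S : Finset ι => S.biUnion D :=
  fun _ _ h => Finset.biUnion_subset_biUnion_of_subset_left D h

lemma ordConnected_biUnion_eq (D : ι → Finset V) (W : Finset V) :
    {S : Finset ι | S.biUnion D = W}.OrdConnected :=
  Set.ordConnected_singleton.preimage_mono (monotone_biUnion D)

lemma biUnion_eq_of_comparable {S T : Finset ι} (hcard : (T.biUnion D).card = (S.biUnion D).card)
    (h : S ⊆ T ∨ T ⊆ S) : T.biUnion D = S.biUnion D := by
  rcases h with h | h
  · exact (Finset.eq_of_subset_of_card_le (monotone_biUnion D h) hcard.le).symm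
  · exact Finset.eq_of_subset_of_card_le (monotone_biUnion D h) hcard.ge

/-- The sets `S` of generators with `B ⊆ S ⊆ A` for which the union of the supports `D` of the
generators in `S` has `j` elements. For squarefree generators this is the degree-`j` strand of the
corresponding subquotient of the Taylor complex. -/
def unionStrand (D : ι → Finset V) (B A : Finset ι) (j : ℕ) : Set (Finset ι) :=
  {S ∈ Set.Icc B A | (S.biUnion D).card = j}

lemma ordConnected_unionStrand (D : ι → Finset V) (B A : Finset ι) (j : ℕ) :
    (unionStrand D B A j).OrdConnected :=
  Set.ordConnected_Icc.inter <|
    Set.ordConnected_singleton.preimage_mono (Finset.card_mono.comp (monotone_biUnion D))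

lemma biUnion_sdiff_eq (D : ι → Finset V) (S : Finset ι) (t : Finset V) :
    S.biUnion D \ t = S.biUnion fun e => D e \ t := by
  ext x
  simp only [Finset.mem_sdiff, Finset.mem_biUnion]
  tauto

/-- The colon ideal `(D e : e ∈ A) : D m` of squarefree monomials with supports `D` is generated by
variables: every `D e \ D m` contains a singleton `D e' \ D m`. -/
def ColonGeneratedByVariables (D : ι → Finset V) (A : Finset ι) (m : ι) : Prop :=
  ∀ e ∈ A, ∃ e' ∈ A, (D e' \ D m).card = 1 ∧ D e' \ D m ⊆ D e \ D m

lemma ColonGeneratedByVariables.notMem {A : Finset ι} {m : ι}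
    (h : ColonGeneratedByVariables D A m) : m ∉ A := by
  intro hm
  obtain ⟨e, -, hcard, hsub⟩ := h m hm
  rw [Finset.sdiff_self, Finset.subset_empty] at hsub
  simp [hsub] at hcard

lemma card_sdiff_eq_one_of_not_disjoint {s t : Finset V} (hs : s.card = 2) (ht : t.card = 2)
    (hne : s ≠ t) (hst : ¬Disjoint s t) : (s \ t).card = 1 := by
  have hinter : (s ∩ t).card ≠ 0 := by
    rwa [Ne, Finset.card_eq_zero, ← Finset.disjoint_iff_inter_eq_empty]
  have hsub : (s \ t).card ≠ 0 := by
    rw [Ne, Finset.card_eq_zero, Finset.sdiff_eq_empty_iff_subset]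
    exact fun h => hne (Finset.eq_of_subset_of_card_le h (by rw [hs, ht]))
  have := Finset.card_sdiff_add_card_inter s t
  omega

lemma colonGeneratedByVariables_of_forall_mem (hD : ∀ e, (D e).card = 2)
    (hinj : Function.Injective D) {A : Finset ι} {v : V} {m : ι} (hA : ∀ e ∈ A, v ∈ D e)
    (hvm : v ∈ D m) (hm : m ∉ A) : ColonGeneratedByVariables D A m := fun e he =>
  ⟨e, he, card_sdiff_eq_one_of_not_disjoint (hD e) (hD m)
    (fun h => hm (hinj h ▸ he)) (Finset.not_disjoint_iff.2 ⟨v, hA e he, hvm⟩), subset_rfl⟩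

variable [DecidableEq ι]

lemma unionStrand_inter_mem (D : ι → Finset V) (B A : Finset ι) (j : ℕ) (e : ι) :
    unionStrand D B A j ∩ {S | e ∈ S} = unionStrand D (insert e B) A j := by
  ext S
  simp only [unionStrand, Set.mem_inter_iff, Set.mem_ofPred_eq, Set.mem_Icc,
    Finset.insert_subset_iff]
  tauto

lemma unionStrand_diff_mem (D : ι → Finset V) (B A : Finset ι) (j : ℕ) (e : ι) :
    unionStrand D B A j \ {S | e ∈ S} = unionStrand D B (A.erase e) j := by
  ext S
  simp only [unionStrand, Set.mem_sdiff, Set.mem_ofPred_eq, Set.mem_Icc,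
    Finset.subset_erase]
  tauto

lemma card_biUnion_insert_of_pairwiseDisjoint_sdiff {S : Finset ι} {m : ι}
    (hcard : ∀ e ∈ S, (D e \ D m).card = 1)
    (hdisj : (S : Set ι).PairwiseDisjoint fun e => D e \ D m) :
    ((insert m S).biUnion D).card = (D m).card + S.card := by
  rw [Finset.biUnion_insert, ← Finset.union_sdiff_self_eq_union,
    Finset.card_union_of_disjoint Finset.disjoint_sdiff, biUnion_sdiff_eq,
    Finset.card_biUnion hdisj, Finset.sum_congr rfl hcard, Finset.sum_const, smul_eq_mul, mul_one]

lemma ColonGeneratedByVariables.erase {A : Finset ι} {m e e' : ι}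
    (h : ColonGeneratedByVariables D A m) (he' : e' ∈ A) (hne : e' ≠ e)
    (hcard : (D e' \ D m).card = 1) (hsub : D e' \ D m ⊆ D e \ D m) :
    ColonGeneratedByVariables D (A.erase e) m := by
  intro f hf
  obtain ⟨f', hf', hcard', hsub'⟩ := h f (Finset.mem_of_mem_erase hf)
  by_cases hfe : f' = e
  · exact ⟨e', Finset.mem_erase.2 ⟨hne, he'⟩, hcard, hsub.trans (hfe ▸ hsub')⟩
  · exact ⟨f', Finset.mem_erase.2 ⟨hfe, hf'⟩, hcard', hsub'⟩

/-- The squarefree monomials with supports `D e`, `e ∈ A`, can be ordered so that each colon ideal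
of the previous ones by the next one is generated by variables. -/
inductive HasLinearQuotients (D : ι → Finset V) : Finset ι → Prop
  | empty : HasLinearQuotients D ∅
  | insert {A : Finset ι} {m : ι} (hA : HasLinearQuotients D A)
      (hm : ColonGeneratedByVariables D A m) : HasLinearQuotients D (insert m A)

lemma ColonGeneratedByVariables.union_star (hD : ∀ e, (D e).card = 2) {A₀ A : Finset ι} {v : V}
    {m : ι} (h : ColonGeneratedByVariables D A m) (hA₀ : ∀ e ∈ A₀, v ∈ D e) (hvm : v ∉ D m)
    (hmeet : ∃ f ∈ A₀, ¬Disjoint (D f) (D m)) : ColonGeneratedByVariables D (A₀ ∪ A) m := by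
  intro e he
  rcases Finset.mem_union.1 he with he | he
  · obtain ⟨f, hf, hfm⟩ := hmeet
    have hcard := card_sdiff_eq_one_of_not_disjoint (hD f) (hD m)
      (fun h => hvm (h ▸ hA₀ f hf)) hfm
    have hv (g : ι) (hg : g ∈ A₀) : v ∈ D g \ D m := Finset.mem_sdiff.2 ⟨hA₀ g hg, hvm⟩
    refine ⟨f, Finset.mem_union_left _ hf, hcard, ?_⟩
    exact fun x hx => Finset.card_le_one.1 hcard.le v (hv f hf) x hx ▸ hv e he
  · obtain ⟨e', he', hcard⟩ := h e he
    exact ⟨e', Finset.mem_union_right _ he', hcard⟩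

lemma HasLinearQuotients.star (hD : ∀ e, (D e).card = 2) (hinj : Function.Injective D) {v : V}
    (A : Finset ι) (hA : ∀ e ∈ A, v ∈ D e) : HasLinearQuotients D A := by
  induction A using Finset.induction_on with
  | empty => exact .empty
  | insert m A hm ih =>
    have hA' : ∀ e ∈ A, v ∈ D e := fun e he => hA e (Finset.mem_insert_of_mem he)
    exact (ih hA').insert (colonGeneratedByVariables_of_forall_mem hD hinj hA'
      (hA m (Finset.mem_insert_self m A)) hm)

lemma HasLinearQuotients.union_star (hD : ∀ e, (D e).card = 2) (hinj : Function.Injective D)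
    {A₀ A : Finset ι} {v : V} (h : HasLinearQuotients D A) (hA₀ : ∀ e ∈ A₀, v ∈ D e)
    (hA : ∀ e ∈ A, v ∉ D e) (hmeet : ∀ e ∈ A, ∃ f ∈ A₀, ¬Disjoint (D f) (D e)) :
    HasLinearQuotients D (A₀ ∪ A) := by
  induction h with
  | empty => exact (Finset.union_empty A₀).symm ▸ .star hD hinj A₀ hA₀
  | @insert A m _ hm ih =>
    rw [Finset.forall_mem_insert] at hA hmeet
    rw [Finset.union_insert]
    exact (ih hA.2 hmeet.2).insert (hm.union_star hD hA₀ hA.1 hmeet.1)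

end LinearQuotients

section Exactness

variable {K : Type} [Field K] {ι V : Type} [LinearOrder ι] [Finite ι] [DecidableEq V]
  {D : ι → Finset V} {A B : Finset ι} {j p : ℕ}

lemma exactAt_unionStrand_of_erase_of_insert (e : ι)
    (herase : ExactAt K (unionStrand D B (A.erase e) j) p)
    (hinsert : ExactAt K (unionStrand D (insert e B) A j) p) :
    ExactAt K (unionStrand D B A j) p := by
  refine ExactAt.of_isUpperSet (U := {S | e ∈ S}) (ordConnected_unionStrand D B A j)
    (fun S T hST hS => hST hS) ?_ ?_
  · rwa [unionStrand_inter_mem]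
  · rwa [unionStrand_diff_mem]

lemma exactAt_unionStrand_of_subset_biUnion {e : ι} (heA : e ∈ A) (heB : e ∉ B)
    (h : D e ⊆ B.biUnion D) : ExactAt K (unionStrand D B A j) p := by
  have hunion (S : Finset ι) (hS : B ⊆ S) : (insert e S).biUnion D = S.biUnion D := by
    rw [Finset.biUnion_insert, Finset.union_eq_right]
    exact h.trans (Finset.biUnion_subset_biUnion_of_subset_left D hS)
  refine ExactAt.of_cone (ordConnected_unionStrand D B A j) (k := e) ?_ ?_ p
  · rintro S ⟨⟨hBS, hSA⟩, hcard⟩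
    exact ⟨⟨hBS.trans (Finset.subset_insert e S), Finset.insert_subset heA hSA⟩,
      by rw [hunion S hBS, hcard]⟩
  · rintro S ⟨⟨hBS, hSA⟩, hcard⟩
    have hBe : B ⊆ S.erase e := Finset.subset_erase.2 ⟨hBS, heB⟩
    refine ⟨⟨hBe, (Finset.erase_subset e S).trans hSA⟩, ?_⟩
    by_cases he : e ∈ S
    · rw [← hunion _ hBe, Finset.insert_erase he, hcard]
    · rw [Finset.erase_eq_of_notMem he, hcard]

lemma exactAt_unionStrand_of_redundant {e e' : ι} (he' : e' ∈ A) (hne : e' ≠ e) (he'B : e' ∉ B)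
    (hsub : D e' ⊆ (insert e B).biUnion D)
    (h : ExactAt K (unionStrand D B (A.erase e) j) p) : ExactAt K (unionStrand D B A j) p :=
  exactAt_unionStrand_of_erase_of_insert e h <|
    exactAt_unionStrand_of_subset_biUnion he' (by simp [hne, he'B]) hsub

/-- A generator whose colon is not a minimal variable is redundant modulo `D m`; once these are
removed, all `S` in the strand of cardinality `p` have union of the same cardinality. -/
theorem ColonGeneratedByVariables.exactAt {m : ι} (h : ColonGeneratedByVariables D A m)
    (hj : j + 1 ≠ p + (D m).card) : ExactAt K (unionStrand D {m} (insert m A) j) p := by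
  induction A using Finset.strongInduction with
  | H A ih =>
  have hm := h.notMem
  by_cases hred : ∃ e ∈ A, ∃ e' ∈ A, e' ≠ e ∧ (D e' \ D m).card = 1 ∧ D e' \ D m ⊆ D e \ D m
  · obtain ⟨e, he, e', he', hne, hcard, hsub⟩ := hred
    have hme : m ≠ e := fun h => hm (h ▸ he)
    refine exactAt_unionStrand_of_redundant (Finset.mem_insert_of_mem he') hne
      (fun h => hm (Finset.mem_singleton.1 h ▸ he')) ?_ ?_
    · rw [Finset.biUnion_insert, Finset.singleton_biUnion]
      exact sdiff_le_iff'.1 (hsub.trans Finset.sdiff_subset)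
    · rw [Finset.erase_insert_of_ne hme]
      exact ih _ (Finset.erase_ssubset he) (h.erase he' hne hcard hsub)
  · push Not at hred
    have hcard : ∀ e ∈ A, (D e \ D m).card = 1 := by
      intro e he
      obtain ⟨e', he', hcard, hsub⟩ := h e he
      by_cases hne : e' = e
      · exact hne ▸ hcard
      · exact absurd hsub (hred e he e' he' hne hcard)
    have hdisj : (A : Set ι).PairwiseDisjoint fun e => D e \ D m := by
      intro e he e' he' hne
      refine Finset.disjoint_left.2 fun x hx hx' => hred e' he' e he hne (hcard e he) ?_
      exact fun y hy => Finset.card_le_one.1 (hcard e he).le x hx y hy ▸ hx'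
    refine .of_forall_card_ne ?_
    rintro S ⟨⟨hmS, hSA⟩, hS⟩ rfl
    have hmS := Finset.singleton_subset_iff.1 hmS
    have hSA : S.erase m ⊆ A := Finset.subset_insert_iff.1 hSA
    have := card_biUnion_insert_of_pairwiseDisjoint_sdiff (fun e he => hcard e (hSA he))
      (hdisj.subset hSA)
    rw [Finset.insert_erase hmS, hS] at this
    have := Finset.card_erase_add_one hmS
    omega

theorem HasLinearQuotients.exactAt {d : ℕ} (h : HasLinearQuotients D A) (hD : ∀ e, (D e).card = d)
    (hp : p ≠ 0) (hj : j + 1 ≠ p + d) : ExactAt K (unionStrand D ∅ A j) p := by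
  induction h with
  | empty =>
    refine .of_forall_card_ne ?_
    rintro S ⟨⟨-, hS⟩, -⟩ hcard
    rw [Finset.subset_empty.1 hS, Finset.card_empty] at hcard
    exact hp hcard.symm
  | @insert A m _ hm ih =>
    refine exactAt_unionStrand_of_erase_of_insert m ?_ (hm.exactAt (hD m ▸ hj))
    rwa [Finset.erase_insert hm.notMem]

end Exactness

/-! ## Euler characteristics -/

section EulerPoincare

open Module (finrank)

variable {K : Type} [Field K] {ι : Type}

lemma finrank_faceSpan (F : Finset (Finset ι)) (p : ℕ) :
    finrank K (faceSpan K (F : Set (Finset ι)) p) = (F.filter (·.card = p)).card := by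
  have hset : {S | S ∈ (F : Set (Finset ι)) ∧ S.card = p} = ↑(F.filter (·.card = p)) :=
    (Finset.coe_filter (·.card = p) F).symm
  rw [faceSpan_eq_supported, hset, (Finsupp.supportedEquivFinsupp _).finrank_eq,
    Module.finrank_finsupp_self]
  exact Fintype.card_coe _

variable [LinearOrder ι]

lemma relBoundaries_eq_bot_of_card_le [Fintype ι] (F : Set (Finset ι)) {N : ℕ}
    (hN : Fintype.card ι ≤ N) : relBoundaries K F N = ⊥ := by
  have h : faceSpan K F (N + 1) = ⊥ := by
    refine (Submodule.eq_bot_iff _).2 fun z hz => Finsupp.ext fun S => ?_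
    by_contra hS
    have := (mem_faceSpan.1 hz S hS).2
    have := S.card_le_univ
    omega
  rw [relBoundaries, h, Submodule.map_bot]

variable [Finite ι]

lemma relCycles_zero (F : Set (Finset ι)) : relCycles K F 0 = faceSpan K F 0 := by
  refine inf_eq_left.2 fun z hz => ?_
  refine (relBoundary_eq_iff (zero_mem (faceSpan K F 0))).2 fun T _ => ?_
  by_contra h
  obtain ⟨k, -, hk⟩ := exists_of_bdS_apply_ne_zero h
  exact Finset.insert_ne_empty k T (Finset.card_eq_zero.1 (mem_faceSpan.1 hz _ hk).2)

lemma finrank_faceSpan_succ (F : Set (Finset ι)) (p : ℕ) :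
    finrank K (faceSpan K F (p + 1)) =
      finrank K (relCycles K F (p + 1)) + finrank K (relBoundaries K F p) := by
  have h := LinearMap.finrank_range_add_finrank_ker (K := K) (V := faceSpan K F (p + 1))
    (V₂ := Finset ι →₀ K) ((relBoundary K F).domRestrict (faceSpan K F (p + 1)))
  rw [LinearMap.range_domRestrict, LinearMap.ker_domRestrict,
    ← Submodule.finrank_map_subtype_eq, Submodule.map_comap_subtype] at h
  rw [relCycles, relBoundaries, ← h, add_comm]

lemma sum_neg_one_pow_mul_finrank_faceSpan (F : Set (Finset ι)) (N : ℕ) :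
    ∑ p ∈ Finset.range (N + 1), (-1 : ℤ) ^ p * finrank K (faceSpan K F p) =
      ∑ p ∈ Finset.range (N + 1),
        (-1 : ℤ) ^ p * ((finrank K (relCycles K F p) : ℤ) - finrank K (relBoundaries K F p)) +
      (-1) ^ N * finrank K (relBoundaries K F N) := by
  induction N with
  | zero =>
    rw [zero_add, Finset.sum_range_one, Finset.sum_range_one, relCycles_zero]
    ring
  | succ N ih =>
    rw [Finset.sum_range_succ, ih, Finset.sum_range_succ _ (N + 1), finrank_faceSpan_succ]
    push_cast
    ring

theorem sum_neg_one_pow_card_eq_sum_finrank [Fintype ι] (F : Finset (Finset ι)) :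
    ∑ S ∈ F, (-1 : ℤ) ^ S.card = ∑ p ∈ Finset.range (Fintype.card ι + 1),
      (-1 : ℤ) ^ p * ((finrank K (relCycles K (F : Set (Finset ι)) p) : ℤ) -
        finrank K (relBoundaries K (F : Set (Finset ι)) p)) := by
  have hmaps : ∀ S ∈ F, S.card ∈ Finset.range (Fintype.card ι + 1) := fun S _ =>
    Finset.mem_range_succ_iff.2 S.card_le_univ
  have h := sum_neg_one_pow_mul_finrank_faceSpan (K := K) (F : Set (Finset ι)) (Fintype.card ι)
  rw [relBoundaries_eq_bot_of_card_le _ le_rfl, finrank_bot, Nat.cast_zero, mul_zero,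
    add_zero] at h
  rw [← h, ← Finset.sum_fiberwise_of_maps_to hmaps]
  refine Finset.sum_congr rfl fun p _ => ?_
  rw [finrank_faceSpan, Finset.sum_congr rfl fun S hS => by rw [(Finset.mem_filter.1 hS).2],
    Finset.sum_const, nsmul_eq_mul, mul_comm]

theorem exists_sum_neg_one_pow_card_eq_of_exactAt (F : Finset (Finset ι))
    (hF : (F : Set (Finset ι)).OrdConnected) {q : ℕ}
    (hexact : ∀ p ≠ q, ExactAt K (F : Set (Finset ι)) p) :
    ∃ h : ℕ, ∑ S ∈ F, (-1 : ℤ) ^ S.card = (-1) ^ q * h := by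
  cases nonempty_fintype ι
  have hle (p : ℕ) := relBoundaries_le_relCycles (K := K) hF p
  have heq (p : ℕ) (hp : p ≠ q) : relCycles K (F : Set (Finset ι)) p = relBoundaries K F p :=
    (hexact p hp).antisymm (hle p)
  rw [sum_neg_one_pow_card_eq_sum_finrank (K := K)]
  by_cases hq : q ∈ Finset.range (Fintype.card ι + 1)
  · refine ⟨finrank K (relCycles K (F : Set (Finset ι)) q) -
      finrank K (relBoundaries K (F : Set (Finset ι)) q), ?_⟩
    rw [Finset.sum_eq_single_of_mem q hq fun p _ hp => by rw [heq p hp, sub_self, mul_zero],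
      Nat.cast_sub (Submodule.finrank_mono (hle q))]
  · refine ⟨0, ?_⟩
    rw [Nat.cast_zero, mul_zero]
    refine Finset.sum_eq_zero fun p hp => ?_
    rw [heq p (ne_of_mem_of_not_mem hp hq), sub_self, mul_zero]

end EulerPoincare

section InclusionExclusion

variable {ι V : Type*} [DecidableEq V]

lemma sum_Icc_neg_one_pow_card {U W : Finset V} (h : U ⊆ W) :
    ∑ Q ∈ Finset.Icc U W, (-1 : ℤ) ^ Q.card = if U = W then (-1) ^ W.card else 0 := by
  have hdisj : ∀ Q ∈ (W \ U).powerset, Disjoint U Q := fun Q hQ =>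
    Finset.disjoint_of_subset_right (Finset.mem_powerset.1 hQ) Finset.disjoint_sdiff
  rw [Finset.Icc_eq_image_powerset h, Finset.sum_image]
  · rw [Finset.sum_congr rfl fun Q hQ => by
      rw [Finset.card_union_of_disjoint (hdisj Q hQ), pow_add], ← Finset.mul_sum,
      Finset.sum_powerset_neg_one_pow_card]
    simp only [Finset.sdiff_eq_empty_iff_subset, h.ge_iff_eq, mul_ite, mul_one, mul_zero]
    by_cases hUW : U = W <;> simp [hUW]
  · intro Q hQ R hR hQR
    rw [← Finset.union_sdiff_cancel_left (hdisj Q hQ),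
      ← Finset.union_sdiff_cancel_left (hdisj R hR)]
    exact congrArg (· \ U) hQR

/-- Both sides count the pairs `⋃_{e ∈ S} D e ⊆ Q ⊆ W` with sign `(-1) ^ (|S| + |Q|)`. -/
theorem neg_one_pow_mul_sum_biUnion_eq [Fintype ι] (D : ι → Finset V) (W : Finset V) :
    (-1 : ℤ) ^ W.card * ∑ S : Finset ι with S.biUnion D = W, (-1 : ℤ) ^ S.card =
      ∑ Q ∈ W.powerset with ∀ e, ¬D e ⊆ Q, (-1 : ℤ) ^ Q.card := by
  classical
  have hQ (Q : Finset V) : ∑ S : Finset ι with S.biUnion D ⊆ Q, (-1 : ℤ) ^ S.card =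
      if ∀ e, ¬D e ⊆ Q then 1 else 0 := by
    have : (Finset.univ.filter fun S : Finset ι => S.biUnion D ⊆ Q) =
        (Finset.univ.filter fun e => D e ⊆ Q).powerset := by
      ext S; simp [Finset.subset_iff (s₁ := S)]
    rw [this, Finset.sum_powerset_neg_one_pow_card]
    simp [Finset.filter_eq_empty_iff]
  have hS (S : Finset ι) : ∑ Q ∈ W.powerset with S.biUnion D ⊆ Q, (-1 : ℤ) ^ Q.card =
      if S.biUnion D = W then (-1) ^ W.card else 0 := by
    have : {Q ∈ W.powerset | S.biUnion D ⊆ Q} = Finset.Icc (S.biUnion D) W := by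
      ext Q; simp [and_comm]
    rw [this]
    by_cases h : S.biUnion D ⊆ W
    · exact sum_Icc_neg_one_pow_card h
    · rw [Finset.Icc_eq_empty h, Finset.sum_empty, if_neg fun heq => h heq.subset]
  calc (-1 : ℤ) ^ W.card * ∑ S : Finset ι with S.biUnion D = W, (-1 : ℤ) ^ S.card
      = ∑ S : Finset ι, (-1 : ℤ) ^ S.card *
          ∑ Q ∈ W.powerset with S.biUnion D ⊆ Q, (-1 : ℤ) ^ Q.card := by
        simp only [hS, mul_ite, mul_zero, ← Finset.sum_filter, Finset.mul_sum]
        simp only [mul_comm]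
    _ = ∑ Q ∈ W.powerset, (-1 : ℤ) ^ Q.card *
          ∑ S : Finset ι with S.biUnion D ⊆ Q, (-1 : ℤ) ^ S.card := by
        simp only [Finset.mul_sum, Finset.sum_filter, mul_ite, mul_zero]
        rw [Finset.sum_comm]
        simp only [mul_comm]
    _ = ∑ Q ∈ W.powerset with ∀ e, ¬D e ⊆ Q, (-1 : ℤ) ^ Q.card := by
        simp only [hQ, mul_ite, mul_one, mul_zero, ← Finset.sum_filter]

end InclusionExclusion

/-! ## Cliques of a cycle -/

section Cycle

variable {l : ℕ}

lemma zmod_natCast_ne_zero {m : ℕ} (hm : m ≠ 0) (hml : m < l) : (m : ZMod l) ≠ 0 := fun h =>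
  hm (Nat.eq_zero_of_dvd_of_lt ((ZMod.natCast_eq_zero_iff m l).1 h) hml)

/-- Two elements of the cycle `ZMod l` are consecutive. -/
def Consecutive (i j : ZMod l) : Prop := j = i + 1 ∨ i = j + 1

lemma pairwise_consecutive_iff (hl : 3 < l) {Q : Finset (ZMod l)} :
    (Q : Set (ZMod l)).Pairwise Consecutive ↔ Q = ∅ ∨ (∃ i, {i} = Q) ∨ ∃ i, {i, i + 1} = Q := by
  have h3 : (3 : ZMod l) ≠ 0 := mod_cast zmod_natCast_ne_zero three_ne_zero hl
  constructor
  · intro hQ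
    rcases Q.eq_empty_or_nonempty with rfl | ⟨i₀, hi₀⟩
    · exact .inl rfl
    by_cases hpair : ∃ i ∈ Q, i + 1 ∈ Q
    · obtain ⟨i, hi, hi'⟩ := hpair
      refine .inr (.inr ⟨i, Finset.Subset.antisymm ?_ fun k hk => ?_⟩)
      · exact Finset.insert_subset hi (Finset.singleton_subset_iff.2 hi')
      · by_contra hne
        obtain ⟨hki, hki'⟩ : k ≠ i ∧ k ≠ i + 1 := by simpa using hne
        have h₁ : i = k + 1 := (hQ hi hk hki.symm).resolve_left hki'
        have h₂ : k = i + 1 + 1 :=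
          (hQ hi' hk hki'.symm).resolve_right fun h => hki (add_right_cancel h).symm
        exact h3 (by linear_combination -h₁ - h₂)
    · refine .inr (.inl ⟨i₀, (Finset.eq_singleton_iff_unique_mem.2 ⟨hi₀, fun k hk => ?_⟩).symm⟩)
      by_contra hne
      rcases hQ hi₀ hk (Ne.symm hne) with rfl | rfl
      exacts [hpair ⟨i₀, hi₀, hk⟩, hpair ⟨k, hk, hi₀⟩]
  · rintro (rfl | ⟨i, rfl⟩ | ⟨i, rfl⟩)
    · simp
    · simp
    · rw [Finset.coe_pair]
      exact Set.pairwise_pair.2 fun _ => ⟨.inl rfl, .inr rfl⟩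

lemma pair_add_one_injective (hl : 2 < l) :
    Function.Injective fun i : ZMod l => ({i, i + 1} : Finset (ZMod l)) := by
  have h2 : (2 : ZMod l) ≠ 0 := mod_cast zmod_natCast_ne_zero two_ne_zero hl
  intro i j hij
  have hi : i = j ∨ i = j + 1 := by
    simpa using (Finset.ext_iff.1 hij i).1 (Finset.mem_insert_self _ _)
  have hj : j = i ∨ j = i + 1 := by
    simpa using (Finset.ext_iff.1 hij j).2 (Finset.mem_insert_self _ _)
  rcases hi, hj with ⟨hi | hi, hj | hj⟩
  · exact hi
  · exact hi
  · exact hj.symm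
  · exact absurd (by linear_combination -hi - hj) h2

open scoped Classical in
/-- The cliques of a long cycle are the empty set, `l` vertices and `l` edges. -/
theorem sum_neg_one_pow_card_of_pairwise_consecutive [NeZero l] (hl : 3 < l) :
    ∑ Q ∈ Finset.univ.filter fun Q : Finset (ZMod l) => (Q : Set (ZMod l)).Pairwise Consecutive,
      (-1 : ℤ) ^ Q.card = 1 := by
  have h1 : (1 : ZMod l) ≠ 0 := mod_cast zmod_natCast_ne_zero one_ne_zero (by omega)
  have hcard (i : ZMod l) : ({i, i + 1} : Finset (ZMod l)).card = 2 :=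
    Finset.card_pair (by simpa using h1)
  have hfilter : (Finset.univ.filter fun Q : Finset (ZMod l) =>
      (Q : Set (ZMod l)).Pairwise Consecutive) =
      insert ∅ (Finset.univ.image (fun i : ZMod l => ({i} : Finset (ZMod l))) ∪
        Finset.univ.image fun i : ZMod l => {i, i + 1}) := by
    ext Q
    simp [pairwise_consecutive_iff hl]
  have hdisj : Disjoint (Finset.univ.image fun i : ZMod l => ({i} : Finset (ZMod l)))
      (Finset.univ.image fun i : ZMod l => {i, i + 1}) := by
    simp only [Finset.disjoint_left, Finset.mem_image, Finset.mem_univ, true_and]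
    rintro _ ⟨i, rfl⟩ ⟨j, hj⟩
    simpa [hj] using hcard j
  rw [hfilter, Finset.sum_insert (by simp [Finset.insert_ne_empty]), Finset.sum_union hdisj,
    Finset.sum_image Finset.singleton_injective.injOn,
    Finset.sum_image (pair_add_one_injective (by omega)).injOn]
  simp [hcard]

lemma sum_neg_one_pow_card_isClique [NeZero l] (hl : 3 < l) {V : Type*} [DecidableEq V]
    {H : SimpleGraph V} [DecidablePred fun Q : Finset V => H.IsClique (Q : Set V)]
    {f : ZMod l → V} (hf : Function.Injective f)
    (hadj : ∀ i j, H.Adj (f i) (f j) ↔ Consecutive i j) :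
    ∑ Q ∈ (Finset.univ.image f).powerset with H.IsClique (Q : Finset V),
      (-1 : ℤ) ^ Q.card = 1 := by
  classical
  have hclique (P : Finset (ZMod l)) :
      H.IsClique (P.image f : Set V) ↔ (P : Set (ZMod l)).Pairwise Consecutive := by
    rw [Finset.coe_image, SimpleGraph.IsClique, hf.injOn.pairwise_image]
    simp only [Set.Pairwise, Function.onFun, hadj]
  refine Eq.trans (Eq.symm ?_) (sum_neg_one_pow_card_of_pairwise_consecutive hl)
  refine Finset.sum_nbij (Finset.image f) ?_ (Finset.image_injective hf).injOn ?_ ?_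
  · intro P hP
    rw [Finset.mem_filter, Finset.mem_powerset, hclique]
    exact ⟨Finset.image_subset_image P.subset_univ, (Finset.mem_filter.1 hP).2⟩
  · intro Q hQ
    obtain ⟨hQf, hQ⟩ := Finset.mem_filter.1 hQ
    obtain ⟨P, -, rfl⟩ := Finset.subset_image_iff.1 (Finset.mem_powerset.1 hQf)
    exact ⟨P, Finset.mem_filter.2 ⟨Finset.mem_univ P, (hclique P).1 hQ⟩, rfl⟩
  · intro P _
    rw [Finset.card_image_of_injective P hf]

end Cycle

/-! ## Simplicial vertices of chordal graphs -/

section InducedPath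

variable {V : Type*}

lemma adj_getVert_iff_of_length_eq_dist {R : SimpleGraph V} {x y : V} {q : R.Walk x y}
    (hq : q.length = R.dist x y) {i j : ℕ} (hi : i ≤ q.length) (hj : j ≤ q.length) :
    R.Adj (q.getVert i) (q.getVert j) ↔ j = i + 1 ∨ i = j + 1 := by
  have hshortcut {a b : ℕ} (hb : b ≤ q.length) (hab : R.Adj (q.getVert a) (q.getVert b)) :
      b ≤ a + 1 := by
    have := SimpleGraph.dist_le ((q.take a).append (.cons hab (q.drop b)))
    rw [SimpleGraph.Walk.length_append, SimpleGraph.Walk.length_cons,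
      SimpleGraph.Walk.take_length, SimpleGraph.Walk.drop_length] at this
    omega
  constructor
  · intro h
    have hne : i ≠ j := fun hij => h.ne (congrArg q.getVert hij)
    have := hshortcut hj h
    have := hshortcut hi h.symm
    omega
  · rintro (rfl | rfl)
    exacts [q.adj_getVert_succ hj, (q.adj_getVert_succ hi).symm]

lemma zmod_eq_add_one_iff_val {l : ℕ} [NeZero l] (hl : 1 < l) (a b : ZMod l) :
    b = a + 1 ↔ b.val = a.val + 1 ∨ a.val + 1 = l ∧ b.val = 0 := by
  have ha := ZMod.val_lt a
  have hb := ZMod.val_lt b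
  have : Fact (1 < l) := ⟨hl⟩
  rw [← (ZMod.val_injective l).eq_iff, ZMod.val_add, ZMod.val_one]
  by_cases h : a.val + 1 = l
  · rw [h, Nat.mod_self]
    omega
  · rw [Nat.mod_eq_of_lt (by omega)]
    omega

end InducedPath

section Dirac

variable {V : Type} {H : SimpleGraph V}

lemma hasInducedCycle_of_inducedPath {m : ℕ} {p : ℕ → V} {v : V} (hp : Set.InjOn p (Set.Iic m))
    (hpv : ∀ i ≤ m, p i ≠ v)
    (hadj : ∀ i ≤ m, ∀ j ≤ m, H.Adj (p i) (p j) ↔ j = i + 1 ∨ i = j + 1)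
    (hvadj : ∀ i ≤ m, H.Adj v (p i) ↔ i = 0 ∨ i = m) : HasInducedCycle H (m + 2) := by
  refine ⟨fun a => if a.val = 0 then v else p (a.val - 1), fun a b hab => ?_, fun a b => ?_⟩
  · apply ZMod.val_injective
    have ha := ZMod.val_lt a
    have hb := ZMod.val_lt b
    beta_reduce at hab
    split_ifs at hab with h₁ h₂ h₂
    · rw [h₁, h₂]
    · exact absurd hab.symm (hpv _ (by omega))
    · exact absurd hab (hpv _ (by omega))
    · have := hp (Set.mem_Iic.2 (by omega)) (Set.mem_Iic.2 (by omega)) hab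
      omega
  · rw [zmod_eq_add_one_iff_val (by omega), zmod_eq_add_one_iff_val (by omega)]
    have ha := ZMod.val_lt a
    have hb := ZMod.val_lt b
    beta_reduce
    split_ifs with h₁ h₂ h₂
    · simp only [SimpleGraph.irrefl, false_iff]
      omega
    · rw [hvadj _ (by omega)]
      omega
    · rw [H.adj_comm, hvadj _ (by omega)]
      omega
    · rw [hadj _ (by omega) _ (by omega)]
      omega

theorem Chordal.adj_of_connected (hH : Chordal H) {v x y : V} {C : Set V}
    (hC : (H.induce C).Connected) (hCv : ∀ c ∈ C, c ≠ v ∧ ¬H.Adj v c) (hxy : x ≠ y)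
    (hvx : H.Adj v x) (hvy : H.Adj v y) (hx : ∃ c ∈ C, H.Adj c x) (hy : ∃ c ∈ C, H.Adj c y) :
    H.Adj x y := by
  by_contra hnxy
  obtain ⟨c, hc, hcx⟩ := hx
  obtain ⟨d, hd, hdy⟩ := hy
  have hconn : (H.induce (C ∪ {x} ∪ {y})).Connected := by
    have hCx := SimpleGraph.connected_induce_union hC.preconnected
      SimpleGraph.Preconnected.of_subsingleton hc (Set.mem_singleton x) hcx
    exact SimpleGraph.connected_induce_union hCx.preconnected
      SimpleGraph.Preconnected.of_subsingleton (.inl hd) (Set.mem_singleton y) hdy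
  obtain ⟨q, hq⟩ := hconn.exists_walk_length_eq_dist ⟨x, .inl (.inr rfl)⟩ ⟨y, .inr rfl⟩
  have hinj := (q.isPath_of_length_eq_dist hq).getVert_injOn
  have hlen : 2 ≤ q.length := by
    by_contra h
    obtain h | h : q.length = 0 ∨ q.length = 1 := by omega
    · exact hxy (congrArg Subtype.val (SimpleGraph.Walk.eq_of_length_eq_zero h))
    · exact hnxy (SimpleGraph.comap_adj.1 (SimpleGraph.Walk.adj_of_length_eq_one h))
  have hmem (i : ℕ) : (q.getVert i : V) ∈ C ∨ (q.getVert i : V) = x ∨ (q.getVert i : V) = y :=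
    or_assoc.1 (q.getVert i).2
  refine hH (q.length + 2) (by omega) (hasInducedCycle_of_inducedPath
    (p := fun i => q.getVert i) (v := v) (fun i hi j hj hij => hinj hi hj (Subtype.ext hij))
    (fun i _ => ?_) (fun i hi j hj => adj_getVert_iff_of_length_eq_dist hq hi hj)
    fun i hi => ⟨fun h => ?_, ?_⟩)
  · rcases hmem i with h | h | h
    exacts [(hCv _ h).1, h.trans_ne hvx.ne', h.trans_ne hvy.ne']
  · rcases hmem i with hi' | hi' | hi'
    · exact absurd h (hCv _ hi').2
    · exact .inl (hinj hi (Nat.zero_le _) (Subtype.ext (by rw [hi', q.getVert_zero])))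
    · exact .inr (hinj hi (le_refl q.length) (Subtype.ext (by rw [hi', q.getVert_length])))
  · rintro (rfl | rfl)
    · rwa [q.getVert_zero]
    · rwa [q.getVert_length]

theorem Chordal.exists_isClique_separator (hH : Chordal H) {X : Finset V} {v u : V} (hu : u ∈ X)
    (huv : u ≠ v) (hvu : ¬H.Adj v u) :
    ∃ C S : Set V, C ∪ S ⊆ X ∧ C.Nonempty ∧ (∀ c ∈ C, c ≠ v ∧ ¬H.Adj v c) ∧
      (∀ s ∈ S, H.Adj v s) ∧ H.IsClique S ∧ ∀ c ∈ C, ∀ a ∈ X, H.Adj c a → a ∈ C ∪ S := by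
  classical
  let IsConnectedIn (C : Finset V) : Prop := u ∈ C ∧ (H.induce (C : Set V)).Connected
  let Z := X.filter fun z => z ≠ v ∧ ¬H.Adj v z
  have hsingle : {u} ∈ Z.powerset.filter IsConnectedIn := by
    have huZ : u ∈ Z := Finset.mem_filter.2 ⟨hu, huv, hvu⟩
    refine Finset.mem_filter.2
      ⟨by simpa using huZ, Finset.mem_singleton_self u, ?_⟩
    rw [Finset.coe_singleton]
    exact ⟨SimpleGraph.Preconnected.of_subsingleton⟩
  obtain ⟨C, hC⟩ := Finset.exists_maximal ⟨_, hsingle⟩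
  obtain ⟨hCZ, huC, hconn⟩ := Finset.mem_filter.1 hC.prop
  rw [Finset.mem_powerset] at hCZ
  have hCv (c : V) (hc : c ∈ C) : c ≠ v ∧ ¬H.Adj v c := (Finset.mem_filter.1 (hCZ hc)).2
  refine ⟨C, {s | s ∈ X ∧ H.Adj v s ∧ ∃ c ∈ C, H.Adj c s}, ?_, ⟨u, huC⟩, hCv, fun s hs => hs.2.1,
    ?_, fun c hc a ha hca => ?_⟩
  · exact Set.union_subset (fun c hc => (Finset.mem_filter.1 (hCZ hc)).1) fun s hs => hs.1
  · exact fun x hx y hy hxy => hH.adj_of_connected hconn hCv hxy hx.2.1 hy.2.1 hx.2.2 hy.2.2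
  · by_cases hva : H.Adj v a
    · exact .inr ⟨ha, hva, c, hc, hca⟩
    · have haZ : a ∈ Z :=
        Finset.mem_filter.2 ⟨ha, fun h => (hCv c hc).2 (h ▸ hca.symm), hva⟩
      have hCa : C ∪ {a} ∈ Z.powerset.filter IsConnectedIn := by
        refine Finset.mem_filter.2 ⟨Finset.mem_powerset.2 (Finset.union_subset hCZ
          (Finset.singleton_subset_iff.2 haZ)), Finset.mem_union_left _ huC, ?_⟩
        rw [Finset.coe_union, Finset.coe_singleton]
        exact SimpleGraph.connected_induce_union hconn.preconnected
          SimpleGraph.Preconnected.of_subsingleton hc (Set.mem_singleton a) hca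
      exact .inl (hC.le_of_ge hCa Finset.subset_union_left
        (Finset.mem_union_right C (Finset.mem_singleton_self a)))

/-- `w` is a simplicial vertex of the subgraph of `H` induced on `X`: its neighbours in `X` form
a clique. -/
def IsSimplicialIn (H : SimpleGraph V) (X : Set V) (w : V) : Prop :=
  w ∈ X ∧ H.IsClique {a | a ∈ X ∧ H.Adj w a}

-- The clique `Q` makes the induction of Dirac's theorem work: it is applied with `Q` a separator.
theorem Chordal.exists_isSimplicialIn_notMem (hH : Chordal H) {X : Finset V} {Q : Set V}
    (hQ : H.IsClique Q) (hXQ : ¬(X : Set V) ⊆ Q) : ∃ w ∉ Q, IsSimplicialIn H X w := by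
  induction X using Finset.strongInduction generalizing Q with
  | H X ih =>
  by_cases hX : H.IsClique (X : Set V)
  · obtain ⟨w, hw, hwQ⟩ := Set.not_subset.1 hXQ
    exact ⟨w, hwQ, hw, hX.subset fun a ha => ha.1⟩
  obtain ⟨v, hv, u, hu, huv, hvu, hvQ⟩ : ∃ v ∈ X, ∃ u ∈ X, u ≠ v ∧ ¬H.Adj v u ∧
      ∀ w ∈ X, w ∈ Q → w = v ∨ H.Adj v w := by
    by_cases h : ∃ v ∈ X, v ∈ Q ∧ ∃ u ∈ X, u ≠ v ∧ ¬H.Adj v u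
    · obtain ⟨v, hv, hvQ, u, hu, huv, hvu⟩ := h
      exact ⟨v, hv, u, hu, huv, hvu, fun w _ hw => or_iff_not_imp_left.2 fun hwv =>
        hQ hvQ hw (Ne.symm hwv)⟩
    · push Not at h
      obtain ⟨⟨v, hv⟩, ⟨u, hu⟩, huv, hvu⟩ := (SimpleGraph.not_isClique_iff H).1 hX
      exact ⟨v, hv, u, hu, fun h => huv (Subtype.ext h.symm), hvu, fun w hw hwQ =>
        or_iff_not_imp_left.2 fun hwv => (h w hw hwQ v hv (Ne.symm hwv)).symm⟩
  obtain ⟨C, S, hCS, hCne, hCv, hSv, hS, hnhd⟩ := hH.exists_isClique_separator hu huv hvu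
  lift C ∪ S to Finset V using X.finite_toSet.subset hCS with Y hY
  have hvY : v ∉ Y := by
    rw [← Finset.mem_coe, hY]
    exact fun h => h.elim (fun hc => (hCv v hc).1 rfl) fun hs => (hSv v hs).ne rfl
  have hYS : ¬(Y : Set V) ⊆ S := fun h =>
    hCne.elim fun c hc => (hCv c hc).2 (hSv c (h (hY.ge (.inl hc))))
  have hYX : Y ⊂ X := ⟨Finset.coe_subset.1 hCS, fun h => hvY (h hv)⟩
  obtain ⟨w, hwS, hwY, hw⟩ := ih Y hYX hS hYS
  have hwC : w ∈ C := (hY.le hwY).resolve_right hwS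
  have hnbr (a : V) (ha : a ∈ X ∧ H.Adj w a) : a ∈ Y ∧ H.Adj w a :=
    ⟨hnhd w hwC a ha.1 ha.2, ha.2⟩
  refine ⟨w, fun hwQ => ?_, hCS hwY, hw.subset hnbr⟩
  exact (hvQ w (hCS hwY) hwQ).elim (hCv w hwC).1 (hCv w hwC).2

end Dirac

/-! ## Betti numbers of edge ideals -/

section TaylorStrand

variable {K : Type} [Field K] {n r : ℕ} (g : Fin r → (Fin n → ℕ))

/-- The sets of generators whose least common multiple has degree `j`: the faces of the degree-`j`
strand of the Taylor complex. -/
def degreeStratum (j : ℕ) : Set (Finset (Fin r)) :=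
  {S | ∑ x, mlcm g S x = j}

lemma strand_eq_faceSpan (p j : ℕ) : strand K g p j = faceSpan K (degreeStratum g j) p := by
  rw [strand, faceSpan]
  congr 1
  ext c
  exact exists_congr fun S => and_left_comm

lemma mlcm_eq_iff_sum_eq {S T : Finset (Fin r)} (h : T ⊆ S) :
    mlcm g T = mlcm g S ↔ ∑ x, mlcm g T x = ∑ x, mlcm g S x := by
  have hle (x : Fin n) : mlcm g T x ≤ mlcm g S x := Finset.sup_mono h
  rw [Finset.sum_eq_sum_iff_of_le fun x _ => hle x, funext_iff]
  simp only [Finset.mem_univ, true_imp_iff]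

lemma bdT_single_eq_relBoundary {S : Finset (Fin r)} {j : ℕ} (hS : S ∈ degreeStratum g j) :
    bdT K g (single S 1) = relBoundary K (degreeStratum g j) (single S 1) := by
  have hlcm (k : Fin r) : mlcm g (S.erase k) = mlcm g S ↔ S.erase k ∈ degreeStratum g j := by
    rw [mlcm_eq_iff_sum_eq g (S.erase_subset k), show ∑ x, mlcm g S x = j from hS]
    rfl
  ext T
  by_cases hT : T ∈ degreeStratum g j
  · rw [relBoundary_apply_of_mem hT]
    simp only [bdT, bdS, bdFace, hlcm, Finsupp.lsum_single, LinearMap.toSpanSingleton_apply,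
      one_smul, Finsupp.finsetSum_apply]
    refine Finset.sum_congr rfl fun k _ => ?_
    split_ifs with hk
    · rfl
    · have hkT : S.erase k ≠ T := fun h => hk ((hlcm k).2 (h ▸ hT))
      simp [hkT]
  · rw [relBoundary_apply_of_notMem hT]
    simp only [bdT, hlcm, Finsupp.lsum_single, LinearMap.toSpanSingleton_apply, one_smul,
      Finsupp.finsetSum_apply]
    refine Finset.sum_eq_zero fun k _ => ?_
    split_ifs with hk
    · have hkT : S.erase k ≠ T := fun h => hT (h ▸ (hlcm k).1 hk)
      simp [hkT]
    · rfl

lemma bdT_eqOn_relBoundary (p j : ℕ) :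
    Set.EqOn (bdT K g) (relBoundary K (degreeStratum g j)) (faceSpan K (degreeStratum g j) p) :=
  LinearMap.eqOn_span' <| by
    rintro _ ⟨S, hS, -, rfl⟩
    exact bdT_single_eq_relBoundary g hS

lemma torRank_eq_zero_iff {p j : ℕ} :
    torRank K g p j = 0 ↔ ExactAt K (degreeStratum g j) p := by
  have hcycles : strand K g p j ⊓ LinearMap.ker (bdT K g) = relCycles K (degreeStratum g j) p := by
    rw [strand_eq_faceSpan]
    ext z
    refine and_congr_right fun hz => ?_
    rw [SetLike.mem_coe, SetLike.mem_coe, LinearMap.mem_ker, LinearMap.mem_ker,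
      bdT_eqOn_relBoundary g p j hz]
  have hboundaries :
      (strand K g (p + 1) j).map (bdT K g) = relBoundaries K (degreeStratum g j) p := by
    rw [strand_eq_faceSpan]
    exact SetLike.coe_injective (bdT_eqOn_relBoundary g (p + 1) j).image_eq
  rw [torRank, hcycles, hboundaries, Nat.sub_eq_zero_iff_le, ExactAt]
  refine ⟨fun h => ?_, fun h => (inf_eq_right.2 h).symm ▸ le_rfl⟩
  exact inf_eq_right.1 (Submodule.eq_of_le_of_finrank_le inf_le_right h)

end TaylorStrand

section EdgeIdeal

variable {K : Type} [Field K] {n : ℕ} {G : SimpleGraph (Fin n)}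

/-- The set of the two endpoints of the `k`-th edge of `G`, that is, the support of the `k`-th
generator of the edge ideal. -/
noncomputable def edgeSupport (G : SimpleGraph (Fin n)) (k : Fin (edgeFins G).card) :
    Finset (Fin n) :=
  ((edgeFins G).equivFin.symm k : Sym2 (Fin n)).toFinset

lemma mem_edgeFins {e : Sym2 (Fin n)} : e ∈ edgeFins G ↔ e ∈ G.edgeSet := by
  simp only [edgeFins, SimpleGraph.mem_edgeFinset]

lemma exists_adj_edgeSupport_eq (k : Fin (edgeFins G).card) :
    ∃ a b, G.Adj a b ∧ edgeSupport G k = {a, b} := by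
  obtain ⟨⟨a, b⟩, hab⟩ : ∃ e : Fin n × Fin n, s(e.1, e.2) = (edgeFins G).equivFin.symm k :=
    Quot.exists_rep _
  refine ⟨a, b, ?_, ?_⟩
  · exact mem_edgeFins.1 (hab ▸ ((edgeFins G).equivFin.symm k).2)
  · rw [edgeSupport, ← hab, Sym2.toFinset_mk_eq]

lemma exists_edgeSupport_eq {a b : Fin n} (h : G.Adj a b) : ∃ k, edgeSupport G k = {a, b} := by
  refine ⟨(edgeFins G).equivFin ⟨s(a, b), mem_edgeFins.2 h⟩, ?_⟩
  rw [edgeSupport, Equiv.symm_apply_apply, Sym2.toFinset_mk_eq]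

lemma card_edgeSupport (k : Fin (edgeFins G).card) : (edgeSupport G k).card = 2 := by
  obtain ⟨a, b, hab, hk⟩ := exists_adj_edgeSupport_eq k
  rw [hk, Finset.card_pair hab.ne]

lemma edgeSupport_injective : Function.Injective (edgeSupport G) := fun k k' h =>
  (edgeFins G).equivFin.symm.injective <| Subtype.ext <| Sym2.ext fun x => by
    rw [← Sym2.mem_toFinset, ← Sym2.mem_toFinset]
    exact Finset.ext_iff.1 h x

lemma sum_mlcm_edgeGens (S : Finset (Fin (edgeFins G).card)) :
    ∑ x, mlcm (edgeGens G) S x = (S.biUnion (edgeSupport G)).card := by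
  have hlcm (x : Fin n) :
      mlcm (edgeGens G) S x = if x ∈ S.biUnion (edgeSupport G) then 1 else 0 := by
    have hgen (k) : edgeGens G k x = if x ∈ edgeSupport G k then 1 else 0 := by
      simp only [edgeGens, edgeSupport, Sym2.mem_toFinset]
    simp only [mlcm, hgen]
    split_ifs with hx
    · obtain ⟨k, hk, hxk⟩ := Finset.mem_biUnion.1 hx
      refine le_antisymm (Finset.sup_le fun k _ => by split_ifs <;> simp) ?_
      exact Finset.le_sup_of_le hk (if_pos hxk).ge
    · refine (Finset.sup_eq_bot_iff _ _).2 fun k hk => if_neg fun hxk => hx ?_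
      exact Finset.mem_biUnion.2 ⟨k, hk, hxk⟩
  simp only [hlcm, Finset.sum_ite_mem, Finset.univ_inter, Finset.sum_const, smul_eq_mul, mul_one]

lemma degreeStratum_edgeGens (j : ℕ) :
    degreeStratum (edgeGens G) j = unionStrand (edgeSupport G) ∅ Finset.univ j := by
  ext S
  simp only [degreeStratum, unionStrand, Set.mem_ofPred_eq, sum_mlcm_edgeGens, Set.mem_Icc,
    Finset.empty_subset, Finset.subset_univ, true_and]

lemma gLinRes_iff : gLinRes K G ↔ ∀ p j, p ≠ 0 → j ≠ p + 1 →
    ExactAt K (unionStrand (edgeSupport G) ∅ Finset.univ j) p := by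
  simp only [gLinRes, gBetti, betti, ne_eq, torRank_eq_zero_iff, degreeStratum_edgeGens]
  refine ⟨fun h p j hp hj => ?_, fun h i j hij => ?_⟩
  · obtain ⟨i, rfl⟩ := Nat.exists_eq_succ_of_ne_zero hp
    exact not_not.1 fun hne => hj (h i j hne)
  · exact not_not.1 fun hj => hij (h (i + 1) j i.succ_ne_zero hj)

lemma IsSimplicialIn.exists_adj_of_edgeSupport_subset {X : Finset (Fin n)} {v : Fin n}
    (hv : IsSimplicialIn Gᶜ X v) {k : Fin (edgeFins G).card} (hk : edgeSupport G k ⊆ X)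
    (hvk : v ∉ edgeSupport G k) : ∃ a ∈ edgeSupport G k, G.Adj v a := by
  obtain ⟨a, b, hab, hk'⟩ := exists_adj_edgeSupport_eq k
  rw [hk', Finset.insert_subset_iff, Finset.singleton_subset_iff] at hk
  simp only [hk', Finset.mem_insert, Finset.mem_singleton, not_or] at hvk
  by_contra! hnot
  have ha : Gᶜ.Adj v a := (G.compl_adj v a).2 ⟨hvk.1, hnot a (by simp [hk'])⟩
  have hb : Gᶜ.Adj v b := (G.compl_adj v b).2 ⟨hvk.2, hnot b (by simp [hk'])⟩
  exact ((G.compl_adj a b).1 (hv.2 ⟨hk.1, ha⟩ ⟨hk.2, hb⟩ hab.ne)).2 hab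

/-- A simplicial vertex `v` of the complement meets or is adjacent to every edge, so the edges
through `v` may be put in front of the others. -/
theorem Chordal.hasLinearQuotients (hG : Chordal Gᶜ) (X : Finset (Fin n)) :
    HasLinearQuotients (edgeSupport G) {k | edgeSupport G k ⊆ X} := by
  induction X using Finset.strongInduction with
  | H X ih =>
  obtain rfl | hX := X.eq_empty_or_nonempty
  · rw [Finset.filter_eq_empty_iff.2 fun k _ hk => ?_]
    · exact .empty
    · simpa [Finset.subset_empty.1 hk] using card_edgeSupport k
  obtain ⟨v, -, hv⟩ := hG.exists_isSimplicialIn_notMem (X := X) (Q := ∅)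
    SimpleGraph.isClique_empty (by simpa using hX.ne_empty)
  have herase := ih _ (Finset.erase_ssubset hv.1)
  simp only [Finset.subset_erase] at herase
  rw [← Finset.filter_union_filter_not_eq (v ∈ edgeSupport G ·) {k | edgeSupport G k ⊆ X},
    Finset.filter_filter, Finset.filter_filter]
  refine herase.union_star (v := v) card_edgeSupport edgeSupport_injective ?_ ?_ ?_ <;>
    simp only [Finset.mem_filter_univ]
  · exact fun k hk => hk.2
  · exact fun k hk => hk.2
  · rintro k ⟨hkX, hvk⟩
    obtain ⟨a, hak, hva⟩ := hv.exists_adj_of_edgeSupport_subset hkX hvk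
    obtain ⟨f, hf⟩ := exists_edgeSupport_eq hva
    have hfX : edgeSupport G f ⊆ X := by
      rw [hf, Finset.insert_subset_iff, Finset.singleton_subset_iff]
      exact ⟨hv.1, hkX hak⟩
    exact ⟨f, ⟨hfX, by simp [hf]⟩, Finset.not_disjoint_iff.2 ⟨a, by simp [hf], hak⟩⟩

theorem gLinRes_of_chordal_compl (hG : Chordal Gᶜ) : gLinRes K G := by
  refine gLinRes_iff.2 fun p j hp hj => ?_
  have h := hG.hasLinearQuotients Finset.univ
  simp only [Finset.subset_univ, Finset.filter_true] at h
  exact h.exactAt card_edgeSupport hp (by omega)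

end EdgeIdeal

section InducedCycle

variable {K : Type} [Field K] {n : ℕ} {G : SimpleGraph (Fin n)}

lemma forall_not_edgeSupport_subset_iff {Q : Finset (Fin n)} :
    (∀ k, ¬edgeSupport G k ⊆ Q) ↔ Gᶜ.IsClique (Q : Set (Fin n)) := by
  refine ⟨fun h a ha b hb hab => (G.compl_adj a b).2 ⟨hab, fun hadj => ?_⟩, fun h k hk => ?_⟩
  · obtain ⟨k, hk⟩ := exists_edgeSupport_eq hadj
    exact h k (by rw [hk, Finset.insert_subset_iff, Finset.singleton_subset_iff]; exact ⟨ha, hb⟩)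
  · obtain ⟨a, b, hab, hk'⟩ := exists_adj_edgeSupport_eq k
    rw [hk', Finset.insert_subset_iff, Finset.singleton_subset_iff] at hk
    exact ((G.compl_adj a b).1 (h hk.1 hk.2 hab.ne)).2 hab

/-- The sets of edges with union `W` form the multidegree-`W` part of the strand of degree
`W.card`, which is a direct summand. -/
lemma gLinRes.exactAt_biUnion_eq (h : gLinRes K G) {W : Finset (Fin n)} (hW : W.Nonempty) {p : ℕ}
    (hp : p + 1 ≠ W.card) : ExactAt K {S | S.biUnion (edgeSupport G) = W} p := by
  obtain rfl | hp0 := eq_or_ne p 0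
  · refine .of_forall_card_ne fun S hS hcard => hW.ne_empty ?_
    rw [← show S.biUnion _ = W from hS, Finset.card_eq_zero.1 hcard, Finset.biUnion_empty]
  refine .of_comparable_closed ?_ ?_ (gLinRes_iff.1 h p W.card hp0 hp.symm)
  · exact fun S hS => ⟨⟨S.empty_subset, S.subset_univ⟩, congrArg Finset.card hS⟩
  · rintro S rfl T ⟨-, hT⟩ hST
    exact biUnion_eq_of_comparable hT hST

theorem chordal_compl_of_gLinRes (h : gLinRes K G) : Chordal Gᶜ := by
  classical
  rintro l hl ⟨f, hf, hadj⟩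
  obtain ⟨q, rfl⟩ := Nat.exists_eq_succ_of_ne_zero (by omega : l ≠ 0)
  set W := Finset.univ.image f
  have hcardW : W.card = q + 1 := by
    rw [Finset.card_image_of_injective _ hf, Finset.card_univ, ZMod.card]
  obtain ⟨b, hb⟩ := exists_sum_neg_one_pow_card_eq_of_exactAt (K := K) (q := q)
    {S | S.biUnion (edgeSupport G) = W}
    (by simpa using ordConnected_biUnion_eq (edgeSupport G) W)
    (fun p hp => by
      simpa using h.exactAt_biUnion_eq (W := W) (Finset.card_pos.1 (by omega))
        (by omega : p + 1 ≠ W.card))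
  have hsum := neg_one_pow_mul_sum_biUnion_eq (edgeSupport G) W
  simp only [forall_not_edgeSupport_subset_iff] at hsum
  rw [hb, sum_neg_one_pow_card_isClique hl hf hadj, hcardW, ← mul_assoc, ← pow_add,
    Odd.neg_one_pow ⟨q, by ring⟩] at hsum
  omega

end InducedCycle

end EP

/-- **Fröberg's theorem.** If the edge ideal `I(G)` has a linear resolution
over some field `K`, then the complement of `G` is chordal; conversely, if the complement
of `G` is chordal then `I(G)` has a linear resolution over every field. -/
theorem statement1 (n : ℕ) (G : SimpleGraph (Fin n)) :
    ((∃ (K : Type) (inst : Field K), @EP.gLinRes K inst n G) → EP.Chordal Gᶜ) ∧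
    (EP.Chordal Gᶜ → ∀ (K : Type) [Field K], EP.gLinRes K G) :=
  ⟨fun ⟨_, _, h⟩ => EP.chordal_compl_of_gLinRes h, fun h _ _ => EP.gLinRes_of_chordal_compl h⟩
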